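/- Let R be a nontrivial commutative ring that is locally residually-ℤ and let G be a subgroup of UT₃(R) containing a₁ and a₂. If the representation G ≤ UT₃(R) satisfies the Lame Property, then G satisfies τ: for all x₁, x₂ ∈ G with [x₂,x₁]=1, [a₂,x₂]=1 and [x₁,a₁]=1, either [x₂,a₁]=1 or [a₂,x₁]=1. -/

import Mathlib

open Matrix

/-- A 3×3 matrix is *upper unitriangular* if all diagonal entries are `1`
and all entries below the diagonal are `0`. -/
def IsUnitriangular {R : Type*} [CommRing R] (M : Matrix (Fin 3) (Fin 3) R) : Prop :=
  (∀ i, M i i = 1) ∧ ∀ i j : Fin 3, j < i → M i j = 0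

/-- The upper unitriangular matrix with above-diagonal entries `a b c`, as a unit. -/
def ut {R : Type*} [CommRing R] (a b c : R) : (Matrix (Fin 3) (Fin 3) R)ˣ where
  val := !![1, a, b; 0, 1, c; 0, 0, 1]
  inv := !![1, -a, a * c - b; 0, 1, -c; 0, 0, 1]
  val_inv := by
    ext i j
    fin_cases i <;> fin_cases j <;>
      simp [Matrix.mul_apply, Fin.sum_univ_three, Matrix.one_apply, Matrix.vecHead, Matrix.vecTail] <;> ring
  inv_val := by
    ext i j
    fin_cases i <;> fin_cases j <;>
      simp [Matrix.mul_apply, Fin.sum_univ_three, Matrix.one_apply, Matrix.vecHead, Matrix.vecTail] <;> ring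

lemma ut_eq_iff {R : Type*} [CommRing R] (g : (Matrix (Fin 3) (Fin 3) R)ˣ) :
    IsUnitriangular (g : Matrix (Fin 3) (Fin 3) R) ↔
      ∃ a b c : R, g = ut a b c := by
  constructor
  · rintro ⟨h1, h2⟩
    refine ⟨(g : Matrix (Fin 3) (Fin 3) R) 0 1, (g : Matrix (Fin 3) (Fin 3) R) 0 2,
      (g : Matrix (Fin 3) (Fin 3) R) 1 2, Units.ext ?_⟩
    ext i j
    fin_cases i <;> fin_cases j <;>
      simp [ut, Matrix.vecHead, Matrix.vecTail, h1, h2 1 0 (by decide), h2 2 0 (by decide), h2 2 1 (by decide)]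
  · rintro ⟨a, b, c, rfl⟩
    constructor
    · intro i; fin_cases i <;> simp [ut]
    · intro i j hij
      fin_cases i <;> fin_cases j <;> simp_all [ut, Matrix.vecHead, Matrix.vecTail]

/-- `UT₃(R)`: the group of 3×3 upper unitriangular matrices over `R`, realized as the
subgroup of units of the matrix ring whose underlying matrices are upper unitriangular. -/
def UT3 (R : Type*) [CommRing R] : Subgroup (Matrix (Fin 3) (Fin 3) R)ˣ where
  carrier := {g | IsUnitriangular (g : Matrix (Fin 3) (Fin 3) R)}
  one_mem' := by
    constructor
    · intro i; simp
    · intro i j hij; simp [Matrix.one_apply, hij.ne']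
  mul_mem' := by
    intro a b ha hb
    rw [Set.mem_setOf_eq, ut_eq_iff] at *
    obtain ⟨a1, a2, a3, rfl⟩ := ha
    obtain ⟨b1, b2, b3, rfl⟩ := hb
    refine ⟨a1 + b1, a2 + b2 + a1 * b3, a3 + b3, Units.ext ?_⟩
    ext i j
    fin_cases i <;> fin_cases j <;>
      simp [ut, Matrix.mul_apply, Fin.sum_univ_three, Matrix.vecHead, Matrix.vecTail] <;> ring
  inv_mem' := by
    intro a ha
    rw [Set.mem_setOf_eq, ut_eq_iff] at *
    obtain ⟨a1, a2, a3, rfl⟩ := ha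
    refine ⟨-a1, a1 * a3 - a2, -a3, Units.ext ?_⟩
    rfl

/-- The generator `a₁` of the Heisenberg group: `(2,3)`-entry `1`, other
above-diagonal entries `0`. -/
def genA1 (R : Type*) [CommRing R] : (Matrix (Fin 3) (Fin 3) R)ˣ := ut 0 0 1

/-- The generator `a₂` of the Heisenberg group: `(1,2)`-entry `1`, other
above-diagonal entries `0`. -/
def genA2 (R : Type*) [CommRing R] : (Matrix (Fin 3) (Fin 3) R)ˣ := ut 1 0 0

lemma genA1_mem (R : Type*) [CommRing R] : genA1 R ∈ UT3 R :=
  (ut_eq_iff _).mpr ⟨0, 0, 1, rfl⟩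

lemma genA2_mem (R : Type*) [CommRing R] : genA2 R ∈ UT3 R :=
  (ut_eq_iff _).mpr ⟨1, 0, 0, rfl⟩

/-- The sentence `τ`: for all `x₁ x₂` in `G` with `[x₂,x₁] = 1`, `[a₂,x₂] = 1` and
`[x₁,a₁] = 1`, either `[x₂,a₁] = 1` or `[a₂,x₁] = 1` (commutators `[y,x] = y⁻¹x⁻¹yx`). -/
def SatisfiesTau (R : Type*) [CommRing R] (G : Subgroup (Matrix (Fin 3) (Fin 3) R)ˣ) : Prop :=
  ∀ x₁ ∈ G, ∀ x₂ ∈ G,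
    x₂⁻¹ * x₁⁻¹ * x₂ * x₁ = 1 →
    (genA2 R)⁻¹ * x₂⁻¹ * genA2 R * x₂ = 1 →
    x₁⁻¹ * (genA1 R)⁻¹ * x₁ * genA1 R = 1 →
    (x₂⁻¹ * (genA1 R)⁻¹ * x₂ * genA1 R = 1 ∨ (genA2 R)⁻¹ * x₁⁻¹ * genA2 R * x₁ = 1)

/-- A commutative ring `R` is *locally residually-ℤ* if for every finitely generated
subring `R₀` of `R` and every nonzero `r ∈ R₀` there is a ring homomorphism
`φ : R₀ →+* ℤ` with `φ r ≠ 0`. -/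
def LocResZ (R : Type*) [CommRing R] : Prop :=
  ∀ R₀ : Subring R, (∃ s : Finset R, R₀ = Subring.closure ↑s) →
    ∀ r : R₀, r ≠ 0 → ∃ φ : R₀ →+* ℤ, φ r ≠ 0

/-- The representation `G ≤ UT₃(R)` satisfies the *Lame Property* if for every
`g ∈ C_G(a₁) ∪ C_G(a₂)`, either `g₁₂² + g₂₃² = 0` or `g₁₂² + g₂₃²` is not a zero
divisor in `R`. -/
def LameProperty (R : Type*) [CommRing R] (G : Subgroup (Matrix (Fin 3) (Fin 3) R)ˣ) : Prop :=
  ∀ g ∈ G, (g * genA1 R = genA1 R * g ∨ g * genA2 R = genA2 R * g) →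
    ((g : Matrix (Fin 3) (Fin 3) R) 0 1 ^ 2 + (g : Matrix (Fin 3) (Fin 3) R) 1 2 ^ 2 = 0 ∨
      (g : Matrix (Fin 3) (Fin 3) R) 0 1 ^ 2 + (g : Matrix (Fin 3) (Fin 3) R) 1 2 ^ 2 ∈
        nonZeroDivisors R)

/-!
As `x₁` commutes with `a₁`, its `(1,2)`-entry is `0`, so `[x₂, x₁] = 1` says that the `(1,2)`-entry
of `x₂` times the `(2,3)`-entry of `x₁` vanishes. A locally residually-`ℤ` ring is reduced because
`ℤ` is, and over a reduced ring the Lame Property forces the `(2,3)`-entry of `x₁` to be `0`, in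
which case `x₁` commutes with `a₂`, or a non-zero-divisor, in which case the `(1,2)`-entry of `x₂`
is `0` and `x₂` commutes with `a₁`.
-/

open scoped nonZeroDivisors

theorem inv_mul_inv_mul_mul_eq_one_iff_commute {H : Type*} [Group H] {y x : H} :
    y⁻¹ * x⁻¹ * y * x = 1 ↔ Commute y x := by
  rw [← Commute.inv_inv_iff, ← commutatorElement_eq_one_iff_commute, commutatorElement_def,
    inv_inv, inv_inv]

section

variable {R : Type*} [CommRing R]

theorem LocResZ.isReduced (hR : LocResZ R) : IsReduced R where
  eq_zero r hr := by
    by_contra hr_ne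
    let r₀ : Subring.closure (({r} : Finset R) : Set R) :=
      ⟨r, Subring.subset_closure (by simp)⟩
    have hr₀ : IsNilpotent r₀ :=
      (IsNilpotent.map_iff (f := Subring.subtype _) Subtype.val_injective).mp hr
    obtain ⟨φ, hφ⟩ := hR _ ⟨{r}, rfl⟩ r₀ fun h ↦ hr_ne (congrArg Subtype.val h)
    exact hφ (hr₀.map φ).eq_zero

theorem ut_mul_ut (a b c a' b' c' : R) :
    ut a b c * ut a' b' c' = ut (a + a') (b' + a * c' + b) (c + c') := by
  ext i j
  fin_cases i <;> fin_cases j <;> simp [ut, Matrix.mul_apply, Fin.sum_univ_three, add_comm]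

theorem commute_iff_of_mem_UT3 {g h : (Matrix (Fin 3) (Fin 3) R)ˣ}
    (hg : g ∈ UT3 R) (hh : h ∈ UT3 R) :
    Commute g h ↔ g.val 0 1 * h.val 1 2 = h.val 0 1 * g.val 1 2 := by
  obtain ⟨a, b, c, rfl⟩ := (ut_eq_iff g).mp hg
  obtain ⟨a', b', c', rfl⟩ := (ut_eq_iff h).mp hh
  rw [commute_iff_eq, ut_mul_ut, ut_mul_ut]
  change _ ↔ a * c' = a' * c
  constructor
  · intro hcomm
    have corner : b' + a * c' + b = b + a' * c + b' :=
      congrArg (fun u : (Matrix (Fin 3) (Fin 3) R)ˣ ↦ u.val 0 2) hcomm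
    linear_combination corner
  · intro hprod
    rw [hprod]
    congr 1 <;> ring

theorem commute_genA1_iff {g : (Matrix (Fin 3) (Fin 3) R)ˣ} (hg : g ∈ UT3 R) :
    Commute g (genA1 R) ↔ g.val 0 1 = 0 := by
  rw [commute_iff_of_mem_UT3 hg (genA1_mem R)]
  simp [genA1, ut]

theorem commute_genA2_iff {g : (Matrix (Fin 3) (Fin 3) R)ˣ} (hg : g ∈ UT3 R) :
    Commute (genA2 R) g ↔ g.val 1 2 = 0 := by
  rw [commute_iff_of_mem_UT3 (genA2_mem R) hg]
  simp [genA2, ut, eq_comm]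

theorem LameProperty.eq_zero_or_mem_nonZeroDivisors [IsReduced R]
    {G : Subgroup (Matrix (Fin 3) (Fin 3) R)ˣ} (hLame : LameProperty R G)
    {g : (Matrix (Fin 3) (Fin 3) R)ˣ} (hg : g ∈ G) (hgU : g ∈ UT3 R) (hcomm : Commute g (genA1 R)) :
    g.val 1 2 = 0 ∨ g.val 1 2 ∈ R⁰ := by
  have h01 : g.val 0 1 = 0 := (commute_genA1_iff hgU).mp hcomm
  have hsq : g.val 1 2 ^ 2 = 0 ∨ g.val 1 2 ^ 2 ∈ R⁰ := by
    simpa only [h01, zero_pow two_ne_zero, zero_add] using hLame g hg (.inl hcomm)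
  rwa [sq_eq_zero_iff, sq, mul_mem_nonZeroDivisors, and_self_iff] at hsq

theorem satisfiesTau_of_lame_general {G : Subgroup (Matrix (Fin 3) (Fin 3) R)ˣ} (hG : G ≤ UT3 R)
    (hreg : ∀ g ∈ G, Commute g (genA1 R) → g.val 1 2 = 0 ∨ g.val 1 2 ∈ R⁰) :
    SatisfiesTau R G := by
  intro x₁ hx₁ x₂ hx₂
  simp only [inv_mul_inv_mul_mul_eq_one_iff_commute]
  intro h₂₁ _ hx₁a₁
  have hx₁_01 : x₁.val 0 1 = 0 := (commute_genA1_iff (hG hx₁)).mp hx₁a₁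
  have hprod : x₂.val 0 1 * x₁.val 1 2 = 0 := by
    rw [(commute_iff_of_mem_UT3 (hG hx₂) (hG hx₁)).mp h₂₁, hx₁_01, zero_mul]
  rw [commute_genA1_iff (hG hx₂), commute_genA2_iff (hG hx₁)]
  exact (hreg x₁ hx₁ hx₁a₁).symm.imp_left fun hx₁_12 ↦
    (mul_right_mem_nonZeroDivisors_eq_zero_iff hx₁_12).mp hprod

end

/-- If a representation `G ≤ UT₃(R)` (with `R` nontrivial, locally
residually-ℤ, and `a₁, a₂ ∈ G`) satisfies the Lame Property, then `G` satisfies `τ`. -/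
theorem satisfiesTau_of_lame (R : Type*) [CommRing R] [Nontrivial R] (hR : LocResZ R)
    (G : Subgroup (Matrix (Fin 3) (Fin 3) R)ˣ) (hG : G ≤ UT3 R)
    (h1 : genA1 R ∈ G) (h2 : genA2 R ∈ G)
    (hLame : LameProperty R G) :
    SatisfiesTau R G := by
  have := hR.isReduced
  exact satisfiesTau_of_lame_general hG fun _ hg ↦
    hLame.eq_zero_or_mem_nonZeroDivisors hg (hG hg)
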